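/- Let Z₁ and Z₂ be independent standard normal random variables and, for ρ ∈ (0,1), set V := ρ Z₁ + √(1−ρ²) Z₂. Let m₁ > 0 and m₂ > 0 satisfy m₁ ≥ ρ m₂, and let μ > 0. Define h(c) := P(Z₁ > −m₁, V < c) + P(Z₁ < −m₁, V > c) − P(Z₁ > −m₁, V > c) − P(Z₁ < −m₁, V < c). Then h(μ − m₂) > h(−m₂). -/

import Mathlib

open MeasureTheory ProbabilityTheory

lemma aux_law {Ω : Type*} [MeasurableSpace Ω] (P : Measure Ω) [IsProbabilityMeasure P]
    (Z₁ Z₂ : Ω → ℝ) (hZ₁ : Measurable Z₁) (hZ₂ : Measurable Z₂)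
    (hlaw₁ : Measure.map Z₁ P = gaussianReal 0 1)
    (hlaw₂ : Measure.map Z₂ P = gaussianReal 0 1)
    (hindep : IndepFun Z₁ Z₂ P) (a b : ℝ) (ha : a ≠ 0) :
    ∃ v, v ≠ 0 ∧ Measure.map (fun ω => a * Z₁ ω + b * Z₂ ω) P = gaussianReal 0 v := by
  have h1 : HasLaw Z₁ (gaussianReal 0 1) P := ⟨hZ₁.aemeasurable, hlaw₁⟩
  have h2 : HasLaw Z₂ (gaussianReal 0 1) P := ⟨hZ₂.aemeasurable, hlaw₂⟩
  have k1 := gaussianReal_const_mul h1 a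
  have k2 := gaussianReal_const_mul h2 b
  have hi : IndepFun (fun ω => a * Z₁ ω) (fun ω => b * Z₂ ω) P :=
    hindep.comp (φ := fun x => a * x) (ψ := fun x => b * x) (by fun_prop) (by fun_prop)
  have k3 := gaussianReal_add_gaussianReal_of_indepFun hi k1.map_eq k2.map_eq
  simp only [mul_zero, add_zero] at k3
  refine ⟨_, ?_, k3⟩
  intro h
  have := congrArg NNReal.toReal h
  simp at this
  have : 0 < a ^ 2 := by positivity
  nlinarith [sq_nonneg b]

lemma aux_indep {Ω : Type*} [MeasurableSpace Ω] (P : Measure Ω) [IsProbabilityMeasure P]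
    (Z₁ Z₂ : Ω → ℝ) (hZ₁ : Measurable Z₁) (hZ₂ : Measurable Z₂)
    (hlaw₁ : Measure.map Z₁ P = gaussianReal 0 1)
    (hlaw₂ : Measure.map Z₂ P = gaussianReal 0 1)
    (hindep : IndepFun Z₁ Z₂ P) (a b c d : ℝ) (hac : a * c + b * d = 0) :
    IndepFun (fun ω => a * Z₁ ω + b * Z₂ ω) (fun ω => c * Z₁ ω + d * Z₂ ω) P := by
  have h1 : HasLaw Z₁ (gaussianReal 0 1) P := ⟨hZ₁.aemeasurable, hlaw₁⟩
  have h2 : HasLaw Z₂ (gaussianReal 0 1) P := ⟨hZ₂.aemeasurable, hlaw₂⟩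
  have g := hindep.hasGaussianLaw h1.hasGaussianLaw h2.hasGaussianLaw
  have m1 := h1.hasGaussianLaw.memLp_two
  have m2 := h2.hasGaussianLaw.memLp_two
  let L : ℝ × ℝ →L[ℝ] ℝ × ℝ :=
    (a • ContinuousLinearMap.fst ℝ ℝ ℝ + b • ContinuousLinearMap.snd ℝ ℝ ℝ).prod
    (c • ContinuousLinearMap.fst ℝ ℝ ℝ + d • ContinuousLinearMap.snd ℝ ℝ ℝ)
  have gL := g.map_fun L
  apply HasGaussianLaw.indepFun_of_covariance_eq_zero
  · simpa [L] using gL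
  · have v1 : cov[Z₁, Z₁; P] = 1 := by
      rw [covariance_self hZ₁.aemeasurable, h1.variance_eq]; simp
    have v2 : cov[Z₂, Z₂; P] = 1 := by
      rw [covariance_self hZ₂.aemeasurable, h2.variance_eq]; simp
    have v3 : cov[Z₁, Z₂; P] = 0 := hindep.covariance_eq_zero m1 m2
    have v4 : cov[Z₂, Z₁; P] = 0 := by rw [covariance_comm]; exact v3
    change cov[a • Z₁ + b • Z₂, c • Z₁ + d • Z₂; P] = 0
    rw [covariance_add_left (m1.const_smul a) (m2.const_smul b)
        ((m1.const_smul c).add (m2.const_smul d)),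
      covariance_add_right (m1.const_smul a) (m1.const_smul c) (m2.const_smul d),
      covariance_add_right (m2.const_smul b) (m1.const_smul c) (m2.const_smul d)]
    simp only [covariance_smul_left, covariance_smul_right, v1, v2, v3, v4]
    linarith

lemma aux_refl {Ω : Type*} [MeasurableSpace Ω] (P : Measure Ω) [IsProbabilityMeasure P]
    (W V : Ω → ℝ) (hW : Measurable W) (hV : Measurable V)
    (v : NNReal) (hWl : Measure.map W P = gaussianReal 0 v) (hi : IndepFun W V P)
    (S : Set (ℝ × ℝ)) (hS : MeasurableSet S) :
    P.real {ω | (W ω, V ω) ∈ S} = P.real {ω | (-W ω, V ω) ∈ S} := by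
  have hi' : IndepFun (fun ω => -W ω) V P :=
    hi.comp (φ := fun x => -x) (ψ := fun x => x) (by fun_prop) (by fun_prop)
  have e1 := (indepFun_iff_map_prod_eq_prod_map_map hW.aemeasurable hV.aemeasurable).1 hi
  have e2 := (indepFun_iff_map_prod_eq_prod_map_map hW.neg.aemeasurable hV.aemeasurable).1 hi'
  have e3 : Measure.map (fun ω => -W ω) P = Measure.map W P := by
    have := (gaussianReal_neg (X := W) (P := P) ⟨hW.aemeasurable, hWl⟩).map_eq
    rw [neg_zero] at this
    rw [hWl]; exact this
  have e4 : Measure.map (fun ω => (-W ω, V ω)) P = Measure.map (fun ω => (W ω, V ω)) P := by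
    rw [e1, ← e3]; exact e2
  have := congrArg (fun ν => ν S) e4
  beta_reduce at this
  rw [Measure.map_apply (by fun_prop) hS, Measure.map_apply (by fun_prop) hS] at this
  unfold Measure.real
  exact congrArg ENNReal.toReal this.symm

lemma aux_pos (v : NNReal) (hv : v ≠ 0) (a b : ℝ) (hab : a < b) :
    0 < gaussianReal 0 v (Set.Ioo a b) := by
  rw [pos_iff_ne_zero]
  intro h
  have := gaussianReal_absolutelyContinuous' 0 hv h
  simp at this
  linarith

theorem discordance_minus_concordance_shifted_cutoff
    {Ω : Type*} [MeasurableSpace Ω] (P : Measure Ω) [IsProbabilityMeasure P]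
    (Z₁ Z₂ : Ω → ℝ) (hZ₁ : Measurable Z₁) (hZ₂ : Measurable Z₂)
    (hlaw₁ : Measure.map Z₁ P = gaussianReal 0 1)
    (hlaw₂ : Measure.map Z₂ P = gaussianReal 0 1)
    (hindep : IndepFun Z₁ Z₂ P)
    (ρ : ℝ) (hρ : ρ ∈ Set.Ioo (0 : ℝ) 1)
    (V : Ω → ℝ) (hV : ∀ ω, V ω = ρ * Z₁ ω + Real.sqrt (1 - ρ ^ 2) * Z₂ ω)
    (m₁ m₂ μ : ℝ) (hm₁ : 0 < m₁) (hm₂ : 0 < m₂) (hm : ρ * m₂ ≤ m₁) (hμ : 0 < μ)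
    (h : ℝ → ℝ)
    (hh : ∀ c, h c =
      (P {ω | -m₁ < Z₁ ω ∧ V ω < c}).toReal + (P {ω | Z₁ ω < -m₁ ∧ c < V ω}).toReal
      - (P {ω | -m₁ < Z₁ ω ∧ c < V ω}).toReal
      - (P {ω | Z₁ ω < -m₁ ∧ V ω < c}).toReal) :
    h (-m₂) < h (μ - m₂) := by
  obtain ⟨hρ0, hρ1⟩ := hρ
  have hs2 : Real.sqrt (1 - ρ ^ 2) ^ 2 = 1 - ρ ^ 2 := Real.sq_sqrt (by nlinarith)
  set s := Real.sqrt (1 - ρ ^ 2) with hs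
  have hVf : V = fun ω => ρ * Z₁ ω + s * Z₂ ω := funext hV
  have hVm : Measurable V := by rw [hVf]; fun_prop
  obtain ⟨W, hW⟩ : ∃ W : Ω → ℝ, W = fun ω => (1 - ρ ^ 2) * Z₁ ω + (-(ρ * s)) * Z₂ ω := ⟨_, rfl⟩
  have hWm : Measurable W := by rw [hW]; fun_prop
  have hZW : ∀ ω, Z₁ ω = W ω + ρ * V ω := by
    intro ω; rw [hV, hW]; ring
  obtain ⟨v, hv, hWl⟩ := aux_law P Z₁ Z₂ hZ₁ hZ₂ hlaw₁ hlaw₂ hindep (1 - ρ ^ 2) (-(ρ * s))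
    (by nlinarith)
  obtain ⟨u, hu, hVl⟩ := aux_law P Z₁ Z₂ hZ₁ hZ₂ hlaw₁ hlaw₂ hindep ρ s hρ0.ne'
  have hi := aux_indep P Z₁ Z₂ hZ₁ hZ₂ hlaw₁ hlaw₂ hindep (1 - ρ ^ 2) (-(ρ * s)) ρ s
    (by linear_combination (-ρ) * hs2)
  rw [← hW] at hWl
  rw [← hVf] at hVl
  rw [← hW, ← hVf] at hi
  -- the key comparison
  have key : ∀ I : Set ℝ, MeasurableSet I → (∀ x ∈ I, -m₂ ≤ x) → Set.Ioo (-m₂) (μ - m₂) ⊆ I →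
      P.real {ω | Z₁ ω < -m₁ ∧ V ω ∈ I} < P.real {ω | -m₁ < Z₁ ω ∧ V ω ∈ I} := by
    intro I hI hIl hIs
    have hS : MeasurableSet {p : ℝ × ℝ | p.1 + ρ * p.2 < -m₁ ∧ p.2 ∈ I} :=
      MeasurableSet.inter (s₁ := {p : ℝ × ℝ | p.1 + ρ * p.2 < -m₁}) (s₂ := Prod.snd ⁻¹' I)
        (measurableSet_lt (by fun_prop) (by fun_prop)) (measurable_snd hI)
    have r := aux_refl P W V hWm hVm v hWl hi _ hS
    simp only [Set.mem_ofPred_eq] at r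
    simp only [hZW]
    rw [r]
    obtain ⟨δ, hδ⟩ : ∃ δ, δ = ρ * (μ / 2) := ⟨_, rfl⟩
    have hδ0 : 0 < δ := by rw [hδ]; positivity
    have pos : 0 < P.real (W ⁻¹' Set.Ioo (-δ) δ ∩ V ⁻¹' Set.Ioo (μ / 2 - m₂) (μ - m₂)) := by
      unfold Measure.real
      rw [hi.measure_inter_preimage_eq_mul _ _ measurableSet_Ioo measurableSet_Ioo,
        ← Measure.map_apply hWm measurableSet_Ioo, ← Measure.map_apply hVm measurableSet_Ioo,
        hWl, hVl, ENNReal.toReal_mul]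
      exact mul_pos
        (ENNReal.toReal_pos (aux_pos v hv _ _ (by linarith)).ne' (measure_ne_top _ _))
        (ENNReal.toReal_pos (aux_pos u hu _ _ (by linarith)).ne' (measure_ne_top _ _))
    have hEm : MeasurableSet (W ⁻¹' Set.Ioo (-δ) δ ∩ V ⁻¹' Set.Ioo (μ / 2 - m₂) (μ - m₂)) :=
      (hWm measurableSet_Ioo).inter (hVm measurableSet_Ioo)
    have hmid : ∀ x, μ / 2 - m₂ < x → δ < m₁ + ρ * x := by
      intro x hx
      have := mul_lt_mul_of_pos_left hx hρ0
      rw [hδ]; nlinarith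
    have hdis : Disjoint {ω | -W ω + ρ * V ω < -m₁ ∧ V ω ∈ I}
        (W ⁻¹' Set.Ioo (-δ) δ ∩ V ⁻¹' Set.Ioo (μ / 2 - m₂) (μ - m₂)) := by
      rw [Set.disjoint_left]
      rintro ω ⟨h1, h2⟩ ⟨⟨h3, h4⟩, h5, h6⟩
      have := hmid _ h5
      linarith
    have hsub : {ω | -W ω + ρ * V ω < -m₁ ∧ V ω ∈ I} ∪
        (W ⁻¹' Set.Ioo (-δ) δ ∩ V ⁻¹' Set.Ioo (μ / 2 - m₂) (μ - m₂)) ⊆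
        {ω | -m₁ < W ω + ρ * V ω ∧ V ω ∈ I} := by
      rintro ω (⟨h1, h2⟩ | ⟨⟨h3, h4⟩, h5, h6⟩)
      · refine ⟨?_, h2⟩
        have := mul_le_mul_of_nonneg_left (hIl _ h2) hρ0.le
        nlinarith
      · have := hmid _ h5
        exact ⟨by linarith, hIs ⟨by linarith, h6⟩⟩
    have hle := measureReal_mono (μ := P) hsub
    rw [measureReal_union hdis hEm] at hle
    linarith
  have k1 := key (Set.Ico (-m₂) (μ - m₂)) measurableSet_Ico (fun x hx => hx.1)
    Set.Ioo_subset_Ico_self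
  have k2 := key (Set.Ioc (-m₂) (μ - m₂)) measurableSet_Ioc (fun x hx => hx.1.le)
    Set.Ioo_subset_Ioc_self
  have lo : ∀ A : Set Ω, P.real {ω | ω ∈ A ∧ V ω < μ - m₂} =
      P.real {ω | ω ∈ A ∧ V ω < -m₂} + P.real {ω | ω ∈ A ∧ V ω ∈ Set.Ico (-m₂) (μ - m₂)} := by
    intro A
    rw [← measureReal_inter_add_sdiff (μ := P) (s := {ω | ω ∈ A ∧ V ω < μ - m₂})
      (hVm (measurableSet_Iio (a := -m₂)))]
    congr 2 <;> ext ω <;> simp <;> grind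
  have hi' : ∀ A : Set Ω, P.real {ω | ω ∈ A ∧ -m₂ < V ω} =
      P.real {ω | ω ∈ A ∧ μ - m₂ < V ω} + P.real {ω | ω ∈ A ∧ V ω ∈ Set.Ioc (-m₂) (μ - m₂)} := by
    intro A
    rw [← measureReal_inter_add_sdiff (μ := P) (s := {ω | ω ∈ A ∧ -m₂ < V ω})
      (hVm (measurableSet_Ioi (a := μ - m₂)))]
    congr 2 <;> ext ω <;> simp <;> grind
  have l1 := lo {ω | -m₁ < Z₁ ω}
  have l2 := lo {ω | Z₁ ω < -m₁}
  have l3 := hi' {ω | -m₁ < Z₁ ω}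
  have l4 := hi' {ω | Z₁ ω < -m₁}
  simp only [Set.mem_ofPred_eq] at l1 l2 l3 l4
  rw [hh, hh]
  simp only [← Measure.real_def]
  linarith
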